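/- arXiv:1802.00659 — 3 statements merged into one kernel-verified Lean document; each statement's English description precedes it below -/
import Mathlib

section
/- Let G be a finite group with N elements, let X ⊆ G, and let y be an element of the subsemigroup of G generated by X. Then there exists a product straight-line program over X in G of length at most 2(log₂ N + 1)³ computing y. -/
/-! Babai–Szemerédi cube doubling: the cube of a list of group elements is the set of products of
its sublists. As long as some `u * x`, with `u` a quotient of two cube elements and `x ∈ X`, is not
itself such a quotient, adjoining it to the list doubles the cube; hence this happens at most
`log₂` of the group order many times. When it stops, the quotients of cube elements contain `1`
and are stable under right multiplication by `X`, so `y` is one of them. A quotient `a / b` takes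
only `O(log |G|)` products: two for each element of the list, plus a fast exponentiation, since
`b⁻¹` is a positive power of `b`. -/

open scoped Pointwise

/-- A finite sequence is a product straight-line program over `X` if each of its terms lies in `X`
or is the product of two earlier terms. Its length `n` is part of the type of `g`. -/
def IsStraightLineProgram {M : Type*} [Mul M] (X : Set M) {n : ℕ} (g : Fin n → M) : Prop :=
  ∀ i, g i ∈ X ∨ ∃ p q, p < i ∧ q < i ∧ g i = g p * g q

/-- All elements of `S` occur among the terms of one straight-line program over `X` of length at
most `n`. Terms outside `S` are forgotten, so that computations compose by inserting elements
into `S`. -/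
def ComputableWithin {M : Type*} [Mul M] (X : Set M) (n : ℕ) (S : Set M) : Prop :=
  ∃ m ≤ n, ∃ g : Fin m → M, IsStraightLineProgram X g ∧ S ⊆ Set.range g

namespace IsStraightLineProgram

variable {M : Type*} {X : Set M} {n : ℕ} {g : Fin n → M}

theorem snoc [Mul M] (hg : IsStraightLineProgram X g) {c : M}
    (hc : c ∈ X ∨ ∃ p q, c = g p * g q) :
    IsStraightLineProgram X (Fin.snoc g c : Fin (n + 1) → M) := by
  intro i
  cases i using Fin.lastCases with
  | last =>
    refine hc.imp (fun hcX => by simpa only [Fin.snoc_last]) ?_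
    rintro ⟨p, q, rfl⟩
    exact ⟨p.castSucc, q.castSucc, p.castSucc_lt_last, q.castSucc_lt_last,
      by simp only [Fin.snoc_last, Fin.snoc_castSucc]⟩
  | cast j =>
    refine (hg j).imp (fun hj => by simpa only [Fin.snoc_castSucc]) ?_
    rintro ⟨p, q, hp, hq, hj⟩
    exact ⟨p.castSucc, q.castSucc, hp, hq, by simpa only [Fin.snoc_castSucc]⟩

theorem comp_castLE [Mul M] (hg : IsStraightLineProgram X g) {m : ℕ} (hmn : m ≤ n) :
    IsStraightLineProgram X (g ∘ Fin.castLE hmn) := fun i =>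
  (hg (i.castLE hmn)).imp_right fun ⟨p, q, hp, hq, hi⟩ =>
    ⟨p.castLT (Nat.lt_trans hp i.isLt), q.castLT (Nat.lt_trans hq i.isLt), hp, hq, hi⟩

theorem mem_subsemigroup_closure [Mul M] (hg : IsStraightLineProgram X g) (i : Fin n) :
    g i ∈ Subsemigroup.closure X := by
  induction i using WellFoundedLT.induction with
  | _ i ih =>
    rcases hg i with hi | ⟨p, q, hp, hq, hi⟩
    · exact Subsemigroup.subset_closure hi
    · exact hi ▸ mul_mem (ih p hp) (ih q hq)

end IsStraightLineProgram

/-- The cube of a list: the products of its sublists, up to `2 ^ zs.length` elements each of which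
costs at most `zs.length` multiplications. -/
def productCube {M : Type*} [Monoid M] : List M → Set M
  | [] => {1}
  | z :: zs => productCube zs ∪ z • productCube zs

section ProductCube

variable {M : Type*} [Monoid M]

theorem one_mem_productCube (zs : List M) : 1 ∈ productCube zs := by
  induction zs with
  | nil => exact Set.mem_singleton 1
  | cons z zs ih => exact Or.inl ih

theorem productCube_subset {H : Submonoid M} {zs : List M} (hzs : ∀ z ∈ zs, z ∈ H) :
    productCube zs ⊆ H := by
  induction zs with
  | nil => exact Set.singleton_subset_iff.2 H.one_mem
  | cons z zs ih =>
    obtain ⟨hz, hzs⟩ := List.forall_mem_cons.1 hzs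
    refine Set.union_subset (ih hzs) ?_
    rintro _ ⟨a, ha, rfl⟩
    exact mul_mem hz (ih hzs ha)

theorem encard_productCube_cons {G : Type*} [Group G] {zs : List G} {z : G}
    (hz : z ∉ productCube zs / productCube zs) :
    (productCube (z :: zs)).encard = 2 * (productCube zs).encard := by
  have hdisj : Disjoint (productCube zs) (z • productCube zs) := by
    refine Set.disjoint_right.2 ?_
    rintro _ ⟨a, ha, rfl⟩ hza
    exact hz ⟨_, hza, a, ha, mul_div_cancel_right z a⟩
  rw [productCube, Set.encard_union_eq hdisj, Set.encard_smul_set, two_mul]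

end ProductCube

namespace ComputableWithin

section Mul

variable {M : Type*} [Mul M] {X S T : Set M} {m n : ℕ}

theorem empty : ComputableWithin X 0 ∅ :=
  ⟨0, le_rfl, Fin.elim0, fun i => i.elim0, Set.empty_subset _⟩

theorem mono (hS : ComputableWithin X m S) (hmn : m ≤ n) (hTS : T ⊆ S) :
    ComputableWithin X n T :=
  let ⟨k, hk, g, hg, hSg⟩ := hS
  ⟨k, hk.trans hmn, g, hg, hTS.trans hSg⟩

theorem subset_subsemigroup_closure (hS : ComputableWithin X n S) :
    S ⊆ Subsemigroup.closure X := by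
  obtain ⟨_, -, g, hg, hSg⟩ := hS
  exact hSg.trans (Set.range_subset_iff.2 hg.mem_subsemigroup_closure)

theorem insert_of_mem (hS : ComputableWithin X n S) {x : M} (hx : x ∈ X) :
    ComputableWithin X (n + 1) (insert x S) := by
  obtain ⟨m, hm, g, hg, hSg⟩ := hS
  refine ⟨m + 1, by lia, Fin.snoc g x, hg.snoc (Or.inl hx), ?_⟩
  rw [Fin.range_snoc]
  exact Set.insert_subset_insert hSg

theorem insert_mul (hS : ComputableWithin X n S) {a b : M} (ha : a ∈ S) (hb : b ∈ S) :
    ComputableWithin X (n + 1) (insert (a * b) S) := by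
  obtain ⟨m, hm, g, hg, hSg⟩ := hS
  obtain ⟨p, rfl⟩ := hSg ha
  obtain ⟨q, rfl⟩ := hSg hb
  refine ⟨m + 1, by lia, Fin.snoc g (g p * g q), hg.snoc (Or.inr ⟨p, q, rfl⟩), ?_⟩
  rw [Fin.range_snoc]
  exact Set.insert_subset_insert hSg

theorem exists_program_last_eq (hS : ComputableWithin X n S) {y : M} (hy : y ∈ S) :
    ∃ (m : ℕ) (g : Fin (m + 1) → M),
      IsStraightLineProgram X g ∧ m + 1 ≤ n ∧ g (Fin.last m) = y := by
  obtain ⟨k, hk, g, hg, hSg⟩ := hS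
  obtain ⟨i, rfl⟩ := hSg hy
  exact ⟨i, _, hg.comp_castLE i.isLt, i.isLt.trans_le hk, rfl⟩

end Mul

section Monoid

variable {M : Type*} [Monoid M] {X S : Set M} {n : ℕ}

theorem insert_pow (hS : ComputableWithin X n S) {a : M} (ha : a ∈ S) {k : ℕ} (hk : k ≠ 0) :
    ComputableWithin X (n + 2 * Nat.log 2 k) (insert (a ^ k) S) := by
  induction k using Nat.strong_induction_on with
  | _ k ih =>
    obtain rfl | hk2 : k = 1 ∨ 2 ≤ k := by lia
    · simpa only [pow_one, Set.insert_eq_of_mem ha, Nat.log_one_right, mul_zero, add_zero] using hS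
    have hlog : Nat.log 2 k = Nat.log 2 (k / 2) + 1 := Nat.log_of_one_lt_of_le one_lt_two hk2
    have hhalf := ih (k / 2) (by lia) (by lia)
    have hsq := hhalf.insert_mul (Set.mem_insert _ _) (Set.mem_insert _ _)
    rw [← pow_add] at hsq
    rcases Nat.even_or_odd' k with ⟨j, rfl | rfl⟩
    · rw [show 2 * j / 2 + 2 * j / 2 = 2 * j by lia] at hsq
      exact hsq.mono (by lia) (by grind)
    · have hodd := hsq.insert_mul (Set.mem_insert _ _)
        (Set.mem_insert_of_mem _ (Set.mem_insert_of_mem _ ha))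
      rw [← pow_succ, show (2 * j + 1) / 2 + (2 * j + 1) / 2 + 1 = 2 * j + 1 by lia] at hodd
      exact hodd.mono (by lia) (by grind)

theorem insert_one (hS : ComputableWithin X n S) {a : M} (ha : a ∈ S) (hfin : IsOfFinOrder a) :
    ComputableWithin X (n + 2 * Nat.log 2 (orderOf a)) (insert 1 S) :=
  pow_orderOf_eq_one a ▸ hS.insert_pow ha hfin.orderOf_pos.ne'

theorem insert_mul_of_mem_productCube (hS : ComputableWithin X n S) {zs : List M}
    (hzs : ∀ z ∈ zs, z ∈ S) {a t : M} (ha : a ∈ productCube zs) (ht : t ∈ S) :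
    ComputableWithin X (n + zs.length) (insert (a * t) S) := by
  induction zs generalizing a with
  | nil =>
    obtain rfl : a = 1 := ha
    simpa only [one_mul, Set.insert_eq_of_mem ht, List.length_nil, add_zero] using hS
  | cons z zs ih =>
    obtain ⟨hz, hzs⟩ := List.forall_mem_cons.1 hzs
    rw [List.length_cons]
    rcases ha with ha | ⟨b, hb, rfl⟩
    · exact (ih hzs ha).mono (by lia) subset_rfl
    · have hzb := (ih hzs hb).insert_mul (Set.mem_insert_of_mem _ hz) (Set.mem_insert _ _)
      rw [← mul_assoc] at hzb
      exact hzb.mono le_rfl (Set.insert_subset_insert (Set.subset_insert _ _))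

end Monoid

section Group

variable {G : Type*} [Group G] {X S : Set G} {n : ℕ}

theorem insert_inv (hS : ComputableWithin X n S) {a : G} (ha : a ∈ S) (hfin : IsOfFinOrder a) :
    ComputableWithin X (n + 2 * Nat.log 2 (orderOf a)) (insert a⁻¹ S) := by
  by_cases ha1 : a = 1
  · subst ha1
    simpa only [inv_one, Set.insert_eq_of_mem ha, orderOf_one, Nat.log_one_right,
      mul_zero, add_zero] using hS
  have hpos := hfin.orderOf_pos
  have hne : orderOf a ≠ 1 := mt orderOf_eq_one_iff.1 ha1
  have hinv : a ^ (orderOf a - 1) = a⁻¹ := by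
    rw [eq_inv_iff_mul_eq_one, ← pow_succ, Nat.sub_add_cancel hpos, pow_orderOf_eq_one]
  have hlog := Nat.log_mono_right (b := 2) (Nat.sub_le (orderOf a) 1)
  exact hinv ▸ (hS.insert_pow ha (k := orderOf a - 1) (by lia)).mono (by lia) subset_rfl

theorem insert_div_of_mem_productCube (hS : ComputableWithin X n S) (h1 : 1 ∈ S) {zs : List G}
    (hzs : ∀ z ∈ zs, z ∈ S) {a b : G} (ha : a ∈ productCube zs) (hb : b ∈ productCube zs)
    (hfin : IsOfFinOrder b) :
    ComputableWithin X (n + 2 * zs.length + 2 * Nat.log 2 (orderOf b)) (insert (a / b) S) := by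
  have hSb : ComputableWithin X (n + zs.length) (insert b S) := by
    simpa only [mul_one] using hS.insert_mul_of_mem_productCube hzs hb h1
  have hSinv := hSb.insert_inv (Set.mem_insert _ _) hfin
  have hSdiv := hSinv.insert_mul_of_mem_productCube
    (fun z hz => Set.mem_insert_of_mem _ (Set.mem_insert_of_mem _ (hzs z hz))) ha
    (Set.mem_insert _ _)
  rw [← div_eq_mul_inv] at hSdiv
  exact hSdiv.mono (by lia) (by grind)

end Group

end ComputableWithin

theorem mul_mem_of_mem_subsemigroup_closure {M : Type*} [Semigroup M] {X D : Set M}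
    (hD : ∀ u ∈ D, ∀ x ∈ X, u * x ∈ D) {u y : M} (hu : u ∈ D)
    (hy : y ∈ Subsemigroup.closure X) : u * y ∈ D := by
  induction hy using Subsemigroup.closure_induction generalizing u with
  | mem x hx => exact hD u hu x hx
  | mul p q _ _ hp hq => exact mul_assoc u p q ▸ hq (hp hu)

section Closure

variable {G : Type*} [Group G] {X : Set G}

/-- The binary logarithm, rounded down, of the order of the group generated by `X`, in which program
lengths are measured; it has the junk value `0` when that group is infinite. -/
noncomputable def logCardClosure (X : Set G) : ℕ :=
  Nat.log 2 (Nat.card (Subgroup.closure X))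

theorem isOfFinOrder_of_mem_closure [Finite (Subgroup.closure X)] {a : G}
    (ha : a ∈ Subgroup.closure X) : IsOfFinOrder a :=
  Submonoid.isOfFinOrder_coe.2 (isOfFinOrder_of_finite (⟨a, ha⟩ : Subgroup.closure X))

theorem log_orderOf_le_logCardClosure [Finite (Subgroup.closure X)] {a : G}
    (ha : a ∈ Subgroup.closure X) : Nat.log 2 (orderOf a) ≤ logCardClosure X :=
  Nat.log_mono_right (Subgroup.orderOf_le_card _ (Set.toFinite _) ha)

theorem subsemigroup_closure_subset_subgroup_closure :
    (Subsemigroup.closure X : Set G) ⊆ Subgroup.closure X :=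
  (Subsemigroup.closure_le (S := (Subgroup.closure X).toSubsemigroup)).2 Subgroup.subset_closure

/-- A list whose cube has as many elements as it has sublists, and whose elements are cheaply
computed from `X`. The first `2 * L + 1` terms, where `L = logCardClosure X`, produce `1`;
the `i`-th element of the list accounts for another `2 * i + 2 * L`. -/
structure IsDoublingList (X : Set G) (zs : List G) : Prop where
  computableWithin : ComputableWithin X
    (zs.length ^ 2 + zs.length + 2 * logCardClosure X * zs.length + 2 * logCardClosure X + 1)
    (insert 1 {z | z ∈ zs})
  encard_productCube : (productCube zs).encard = 2 ^ zs.length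

end Closure

namespace IsDoublingList

variable {G : Type*} [Group G] {X : Set G} {zs : List G}

theorem productCube_subset_closure (hzs : IsDoublingList X zs) :
    productCube zs ⊆ Subgroup.closure X :=
  productCube_subset (H := (Subgroup.closure X).toSubmonoid) fun _ hz =>
    subsemigroup_closure_subset_subgroup_closure
      (hzs.computableWithin.subset_subsemigroup_closure (Set.mem_insert_of_mem _ hz))

variable [Finite (Subgroup.closure X)]

theorem length_le (hzs : IsDoublingList X zs) : zs.length ≤ logCardClosure X := by
  refine Nat.le_log_of_pow_le one_lt_two ?_
  have hcard := Set.encard_le_encard hzs.productCube_subset_closure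
  rw [hzs.encard_productCube, ← (Set.toFinite _).cast_ncard_eq, ← Nat.card_coe_set_eq] at hcard
  exact_mod_cast hcard

theorem nil (hX : X.Nonempty) : IsDoublingList X [] where
  computableWithin := by
    obtain ⟨x, hx⟩ := hX
    have hxcl := Subgroup.subset_closure hx
    have hlog := log_orderOf_le_logCardClosure hxcl
    refine ((ComputableWithin.empty.insert_of_mem hx).insert_one (Set.mem_insert _ _)
      (isOfFinOrder_of_mem_closure hxcl)).mono (by simp only [List.length_nil]; lia) ?_
    exact Set.insert_subset_insert fun z hz => absurd hz List.not_mem_nil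
  encard_productCube := by simp only [productCube, Set.encard_singleton, List.length_nil, pow_zero]

theorem computableWithin_insert_of_mem_div (hzs : IsDoublingList X zs) {u : G}
    (hu : u ∈ productCube zs / productCube zs) :
    ComputableWithin X
      (zs.length ^ 2 + 3 * zs.length + 2 * logCardClosure X * zs.length +
        4 * logCardClosure X + 1)
      (insert u (insert 1 {z | z ∈ zs})) := by
  obtain ⟨a, ha, b, hb, rfl⟩ := hu
  have hbcl := hzs.productCube_subset_closure hb
  have hlog := log_orderOf_le_logCardClosure hbcl
  exact (hzs.computableWithin.insert_div_of_mem_productCube (Set.mem_insert _ _)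
    (fun z hz => Set.mem_insert_of_mem _ hz) ha hb (isOfFinOrder_of_mem_closure hbcl)).mono
    (by lia) subset_rfl

theorem cons (hzs : IsDoublingList X zs) {u x : G} (hu : u ∈ productCube zs / productCube zs)
    (hx : x ∈ X) (hux : u * x ∉ productCube zs / productCube zs) :
    IsDoublingList X ((u * x) :: zs) where
  computableWithin := by
    have hmul := ((hzs.computableWithin_insert_of_mem_div hu).insert_of_mem hx).insert_mul
      (Set.mem_insert_of_mem _ (Set.mem_insert _ _)) (Set.mem_insert _ _)
    refine hmul.mono (by rw [List.length_cons]; lia) ?_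
    intro z hz
    simp only [Set.mem_insert_iff, Set.mem_ofPred_eq, List.mem_cons] at hz ⊢
    tauto
  encard_productCube := by
    rw [encard_productCube_cons hux, hzs.encard_productCube, List.length_cons, pow_succ']

theorem exists_div_stable (hX : X.Nonempty) :
    ∃ zs, IsDoublingList X zs ∧ ∀ u ∈ productCube zs / productCube zs, ∀ x ∈ X,
      u * x ∈ productCube zs / productCube zs := by
  have hbdd : BddAbove (List.length '' {zs | IsDoublingList X zs}) :=
    ⟨logCardClosure X, Set.forall_mem_image.2 fun _ hzs => hzs.length_le⟩
  obtain ⟨_, ⟨zs, hzs, rfl⟩, hmax⟩ :=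
    hbdd.exists_isGreatest_of_nonempty ⟨_, Set.mem_image_of_mem _ (nil hX)⟩
  refine ⟨zs, hzs, fun u hu x hx => by_contra fun hux => ?_⟩
  exact (Nat.lt_succ_self zs.length).not_ge (hmax (Set.mem_image_of_mem _ (hzs.cons hu hx hux)))

end IsDoublingList

theorem group_polylog_straight_line_program_general {G : Type*} [Group G] (X : Set G)
    [Finite (Subgroup.closure X)] (y : G) (hy : y ∈ Subsemigroup.closure X) :
    ∃ (m : ℕ) (g : Fin (m + 1) → G),
      IsStraightLineProgram X g ∧
      m + 1 ≤ 3 * logCardClosure X ^ 2 + 7 * logCardClosure X + 1 ∧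
      g (Fin.last m) = y := by
  have hX : X.Nonempty := Set.nonempty_iff_ne_empty.2 <| by
    rintro rfl
    exact absurd (Subsemigroup.closure_empty (M := G) ▸ hy) Subsemigroup.notMem_bot
  obtain ⟨zs, hzs, hstable⟩ := IsDoublingList.exists_div_stable hX
  have h1 : 1 ∈ productCube zs / productCube zs :=
    ⟨1, one_mem_productCube zs, 1, one_mem_productCube zs, div_one 1⟩
  have hydiv : y ∈ productCube zs / productCube zs :=
    one_mul y ▸ mul_mem_of_mem_subsemigroup_closure hstable h1 hy
  have hlen := hzs.length_le
  exact ((hzs.computableWithin_insert_of_mem_div hydiv).mono (by nlinarith)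
    subset_rfl).exists_program_last_eq (Set.mem_insert _ _)

theorem quadratic_logCardClosure_le_cubic_logb {G : Type*} [Group G] [Fintype G] (X : Set G) :
    ((3 * logCardClosure X ^ 2 + 7 * logCardClosure X + 1 : ℕ) : ℝ) ≤
      2 * (Real.logb 2 (Fintype.card G) + 1) ^ 3 := by
  have hlog : (logCardClosure X : ℝ) ≤ Real.logb 2 (Fintype.card G) := by
    have hcard : logCardClosure X ≤ Nat.log 2 (Fintype.card G) :=
      Nat.log_mono_right ((Subgroup.closure X).card_le_card_group.trans_eq Nat.card_eq_fintype_card)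
    exact (Nat.cast_le.2 hcard).trans (by exact_mod_cast Real.natLog_le_logb (Fintype.card G) 2)
  have hpoly (L : ℕ) : 3 * L ^ 2 + 7 * L + 1 ≤ 2 * (L + 1) ^ 3 := by
    nlinarith [Nat.le_self_pow three_ne_zero L]
  calc ((3 * logCardClosure X ^ 2 + 7 * logCardClosure X + 1 : ℕ) : ℝ)
      ≤ (2 * (logCardClosure X + 1) ^ 3 : ℕ) := Nat.cast_le.2 (hpoly _)
    _ = 2 * ((logCardClosure X : ℝ) + 1) ^ 3 := by push_cast; rfl
    _ ≤ 2 * (Real.logb 2 (Fintype.card G) + 1) ^ 3 := by gcongr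

/-- The variety of finite groups has the poly-logarithmic circuits property,
expressed via product straight-line programs: if `G` is a finite group with `N`
elements, `X ⊆ G` and `y` lies in the subsemigroup of `G` generated by `X`,
then there is a product straight-line program over `X` in `G` (a sequence
`g : Fin (m + 1) → G`, of length `m + 1`, in which every element is in `X` or a
product of two earlier elements) of length at most `2 (log₂ N + 1)³` whose last
element is `y`. -/
theorem group_polylog_straight_line_program {G : Type*} [Group G] [Fintype G]
    (X : Set G) (y : G) (hy : y ∈ Subsemigroup.closure X) :
    ∃ (m : ℕ) (g : Fin (m + 1) → G),
      (∀ i, g i ∈ X ∨ ∃ p q, p < i ∧ q < i ∧ g i = g p * g q) ∧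
      ((m + 1 : ℕ) : ℝ) ≤ 2 * (Real.logb 2 (Fintype.card G) + 1) ^ 3 ∧
      g (Fin.last m) = y := by
  obtain ⟨m, g, hg, hm, hlast⟩ := group_polylog_straight_line_program_general X y hy
  exact ⟨m, g, hg, (Nat.cast_le.2 hm).trans (quadratic_logCardClosure_le_cubic_logb X), hlast⟩
end

section
/- Every finite nilpotent semigroup is a quotient of a subdirect product of a finite group and a finite commutative semigroup: if S is a finite semigroup whose only idempotent is a zero element, then there exist a finite group G, a finite commutative semigroup T, a subsemigroup U of the direct product G × T, and a surjective semigroup morphism φ : U → S. -/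
/-- `S` is a quotient of a subdirect product of `G` and `T`: there are a
subsemigroup `U` of the direct product `G × T` (with componentwise
multiplication) and a surjective semigroup morphism `φ : U → S`. -/
def IsQuotientOfSubsemigroupOfProd (S : Type*) [Semigroup S]
    (G T : Type) [Group G] [CommSemigroup T] : Prop :=
  ∃ (U : Subsemigroup (G × T)) (φ : U → S),
    (∀ a b : U, φ (a * b) = φ a * φ b) ∧ Function.Surjective φ

/-!
Present `S` as a quotient of the free semigroup on its elements. In a nilpotent semigroup, a
product of more than `|S|` factors is zero: lengthening a nonzero product strictly shrinks the left
ideal it generates, since otherwise the product would be fixed by a nonzero idempotent. So a word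
determines its value in `S` through its letters if it is short, and through the mere fact of being
long otherwise. Short words are separated by a finite group of permutations of words, because
left multiplication by a letter is a partial injection and extends to a permutation. Length is
detected by the multiplicative monoid of `ZMod (2 ^ n)`, in which `2 ^ k` vanishes exactly when
`n ≤ k`.
-/

theorem IsQuotientOfSubsemigroupOfProd.of_factorsThrough {F S : Type*} [Semigroup F] [Semigroup S]
    {G T : Type} [Group G] [CommSemigroup T] (f : F →ₙ* G × T) {φ : F →ₙ* S}
    (hφ : Function.Surjective φ) (hfactors : Function.FactorsThrough φ f) :
    IsQuotientOfSubsemigroupOfProd S G T := by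
  have hf := f.srangeRestrict_surjective
  let ψ : f.srange → S := φ ∘ Function.surjInv hf
  have hψ (x : F) : ψ (f.srangeRestrict x) = φ x :=
    hfactors (congrArg Subtype.val (Function.surjInv_eq hf (f.srangeRestrict x)))
  refine ⟨f.srange, ψ, fun a b => ?_, fun s => ?_⟩
  · obtain ⟨x, rfl⟩ := hf a
    obtain ⟨y, rfl⟩ := hf b
    rw [← map_mul, hψ, hψ, hψ, map_mul]
  · obtain ⟨x, rfl⟩ := hφ s
    exact ⟨f.srangeRestrict x, hψ x⟩

section LeftMultiplication

variable {S : Type*} [Semigroup S]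

theorem exists_isIdempotentElem_mul_eq_self [Finite S] {a x : S} (h : a * x = x) :
    ∃ e : S, IsIdempotentElem e ∧ e * x = x := by
  let : TopologicalSpace S := ⊥
  have : DiscreteTopology S := ⟨rfl⟩
  obtain ⟨e, he, he_idem⟩ := exists_idempotent_in_compact_subsemigroup
    (fun _ : S => continuous_of_discreteTopology) {b : S | b * x = x} ⟨a, h⟩
    (Set.toFinite _).isCompact
    (fun b (hb : b * x = x) c (hc : c * x = x) => show b * c * x = x by rw [mul_assoc, hc, hb])
  exact ⟨e, he_idem, he⟩

/-- The principal left ideal `S¹x`, written without adjoining an identity to `S`.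
Its cardinality bounds how far the nonzero product `x` can still be extended on the left. -/
def principalLeftIdeal (x : S) : Set S :=
  insert x (Set.range (· * x))

theorem self_mem_principalLeftIdeal (x : S) : x ∈ principalLeftIdeal x :=
  Set.mem_insert _ _

theorem mul_mem_principalLeftIdeal (a x : S) : a * x ∈ principalLeftIdeal x :=
  Set.mem_insert_of_mem _ ⟨a, rfl⟩

theorem principalLeftIdeal_mul_subset (a x : S) :
    principalLeftIdeal (a * x) ⊆ principalLeftIdeal x := by
  rintro _ (rfl | ⟨s, rfl⟩)
  · exact mul_mem_principalLeftIdeal a x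
  · simpa only [mul_assoc] using mul_mem_principalLeftIdeal (s * a) x

theorem exists_mul_eq_self_of_mem_principalLeftIdeal_mul {a x : S}
    (h : x ∈ principalLeftIdeal (a * x)) : ∃ b : S, b * x = x := by
  rcases h with h | ⟨s, h⟩
  · exact ⟨a, h.symm⟩
  · exact ⟨s * a, (mul_assoc s a x).trans h⟩

end LeftMultiplication

section Nilpotent

variable {S : Type*} [SemigroupWithZero S] [Finite S]

theorem eq_zero_of_mul_eq_self (hid : ∀ e : S, IsIdempotentElem e → e = 0) {a x : S}
    (h : a * x = x) : x = 0 := by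
  obtain ⟨e, he_idem, he⟩ := exists_isIdempotentElem_mul_eq_self h
  rw [← he, hid e he_idem, zero_mul]

theorem principalLeftIdeal_mul_ssubset (hid : ∀ e : S, IsIdempotentElem e → e = 0) (a : S)
    {x : S} (hx : x ≠ 0) : principalLeftIdeal (a * x) ⊂ principalLeftIdeal x := by
  refine (Set.ssubset_iff_of_subset (principalLeftIdeal_mul_subset a x)).2
    ⟨x, self_mem_principalLeftIdeal x, fun h => hx ?_⟩
  obtain ⟨b, hb⟩ := exists_mul_eq_self_of_mem_principalLeftIdeal_mul h
  exact eq_zero_of_mul_eq_self hid hb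

variable {A : Type*}

theorem length_add_ncard_principalLeftIdeal_le (hid : ∀ e : S, IsIdempotentElem e → e = 0)
    (φ : FreeSemigroup A →ₙ* S) (w : FreeSemigroup A) (hw : φ w ≠ 0) :
    w.length + (principalLeftIdeal (φ w)).ncard ≤ Nat.card S + 1 := by
  induction w with
  | ih1 a =>
    have := Set.ncard_le_card (principalLeftIdeal (φ (.of a)))
    rw [FreeSemigroup.length_of]
    omega
  | ih2 a w _ ih =>
    rw [map_mul] at hw ⊢
    have hw' : φ w ≠ 0 := right_ne_zero_of_mul hw
    have hlt := Set.ncard_lt_ncard (principalLeftIdeal_mul_ssubset hid (φ (.of a)) hw')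
      (Set.toFinite _)
    have hle := ih hw'
    rw [FreeSemigroup.length_mul, FreeSemigroup.length_of]
    omega

theorem map_eq_zero_of_card_lt_length (hid : ∀ e : S, IsIdempotentElem e → e = 0)
    (φ : FreeSemigroup A →ₙ* S) {w : FreeSemigroup A} (hw : Nat.card S < w.length) : φ w = 0 := by
  by_contra hne
  have hle := length_add_ncard_principalLeftIdeal_le hid φ w hne
  have hpos : 0 < (principalLeftIdeal (φ w)).ncard :=
    (Set.ncard_pos (Set.toFinite _)).2 ⟨φ w, self_mem_principalLeftIdeal _⟩
  omega

end Nilpotent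

section Separation

theorem exists_perm_eq_mul_left {M : Type*} [Mul M] [IsLeftCancelMul M] (t : Finset M) (a : M) :
    ∃ σ : Equiv.Perm t, ∀ x : t, a * x ∈ t → (σ x : M) = a * x :=
  Set.MapsTo.exists_equiv_extend_of_card_eq (s := {x : t | a * x ∈ t}) (Fintype.card_coe t)
    (fun _ hx => hx) (fun _ _ _ _ h => Subtype.ext (mul_left_cancel h))

theorem exists_monoidHom_perm_injOn {A : Type*} (t : Finset (FreeMonoid A)) (hone : 1 ∈ t)
    (hsuffix : ∀ a w, FreeMonoid.of a * w ∈ t → w ∈ t) :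
    ∃ g : FreeMonoid A →* Equiv.Perm t, Set.InjOn g t := by
  choose σ hσ using fun a : A => exists_perm_eq_mul_left t (FreeMonoid.of a)
  let g : FreeMonoid A →* Equiv.Perm t := FreeMonoid.lift σ
  have apply_one (w : FreeMonoid A) (hw : w ∈ t) : (g w ⟨1, hone⟩ : FreeMonoid A) = w := by
    induction w using FreeMonoid.inductionOn' with
    | one => rw [map_one, Equiv.Perm.one_apply]
    | of_mul a w ih =>
      have hgw := ih (hsuffix a w hw)
      rw [map_mul, Equiv.Perm.mul_apply, FreeMonoid.lift_eval_of, hσ a _ (by rwa [hgw]), hgw]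
  refine ⟨g, fun v hv w hw h => ?_⟩
  rw [← apply_one v hv, h, apply_one w hw]

theorem exists_finite_group_monoidHom_injOn_length_le.{u} (A : Type u) [Finite A] (n : ℕ) :
    ∃ (G : Type u) (_ : Group G) (_ : Finite G) (g : FreeMonoid A →* G),
      Set.InjOn g {w | w.length ≤ n} := by
  have hfin : {w : FreeMonoid A | w.length ≤ n}.Finite := List.finite_length_le A n
  obtain ⟨g, hg⟩ := exists_monoidHom_perm_injOn hfin.toFinset (by simp) (fun a w hw => by
    simp only [Set.Finite.mem_toFinset, Set.mem_ofPred_eq, FreeMonoid.length_mul,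
      FreeMonoid.length_of] at hw ⊢
    omega)
  exact ⟨_, inferInstance, inferInstance, g, by simpa only [Set.Finite.coe_toFinset] using hg⟩

theorem length_toFreeMonoid {A : Type*} (w : FreeSemigroup A) :
    w.toFreeMonoid.length = w.length := by
  induction w with
  | ih1 a => rfl
  | ih2 a w _ ih => rw [map_mul, FreeMonoid.length_mul, ih, FreeSemigroup.length_mul]; rfl

theorem freeSemigroup_lift_const {A M : Type*} [Monoid M] (c : M) (w : FreeSemigroup A) :
    FreeSemigroup.lift (fun _ => c) w = c ^ w.length := by
  induction w with
  | ih1 a => rw [FreeSemigroup.lift_of, FreeSemigroup.length_of, pow_one]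
  | ih2 a w ha ih => rw [map_mul, ha, ih, FreeSemigroup.length_mul, pow_add]

theorem zmod_natCast_pow_eq_zero_iff {b : ℕ} (hb : 1 < b) {n k : ℕ} :
    (b : ZMod (b ^ n)) ^ k = 0 ↔ n ≤ k := by
  rw [← Nat.cast_pow, ZMod.natCast_eq_zero_iff, Nat.pow_dvd_pow_iff_le_right hb]

theorem exists_hom_prod_eq_imp_eq_or_lt_length.{u} (A : Type u) [Finite A] (n : ℕ) :
    ∃ (G : Type u) (T : Type) (_ : Group G) (_ : CommSemigroup T) (_ : Finite G) (_ : Finite T)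
      (f : FreeSemigroup A →ₙ* G × T),
      ∀ v w, f v = f w → v = w ∨ (n < v.length ∧ n < w.length) := by
  obtain ⟨G, _, _, g, hg⟩ := exists_finite_group_monoidHom_injOn_length_le A n
  let γ : FreeSemigroup A →ₙ* G := g.toMulHom.comp FreeSemigroup.toFreeMonoid
  let τ : FreeSemigroup A →ₙ* ZMod (2 ^ (n + 1)) := FreeSemigroup.lift fun _ => (2 : ℕ)
  have hτ (w) : τ w = 0 ↔ n < w.length := by
    rw [freeSemigroup_lift_const, zmod_natCast_pow_eq_zero_iff one_lt_two, Nat.succ_le_iff]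
  refine ⟨G, ZMod (2 ^ (n + 1)), inferInstance, inferInstance, inferInstance, inferInstance,
    γ.prod τ, fun v w h => ?_⟩
  obtain ⟨hγ_eq, hτ_eq⟩ : γ v = γ w ∧ τ v = τ w := Prod.ext_iff.1 h
  have hlong : n < v.length ↔ n < w.length := by rw [← hτ, ← hτ, hτ_eq]
  by_cases hv : n < v.length
  · exact .inr ⟨hv, hlong.1 hv⟩
  · have mem_short {u : FreeSemigroup A} (hu : ¬ n < u.length) : u.toFreeMonoid.length ≤ n := by
      rwa [length_toFreeMonoid, ← not_lt]
    exact .inl (FreeSemigroup.toFreeMonoid_injective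
      (hg (mem_short hv) (mem_short (mt hlong.2 hv)) hγ_eq))

end Separation

/-- Every finite nilpotent semigroup (a finite semigroup whose only idempotent
is a zero element `z`) is a quotient of a subdirect product of a finite group
and a finite commutative semigroup. -/
theorem nilpotent_quotient_of_subdirect_product
    {S : Type*} [Semigroup S] [Fintype S] (z : S)
    (hz : ∀ x : S, z * x = z ∧ x * z = z)
    (hid : ∀ y : S, y * y = y → y = z) :
    ∃ (G T : Type) (hG : Group G) (hT : CommSemigroup T),
      Finite G ∧ Finite T ∧
      @IsQuotientOfSubsemigroupOfProd S _ G T hG hT := by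
  let : SemigroupWithZero S :=
    { ‹Semigroup S› with zero := z, zero_mul := fun x => (hz x).1, mul_zero := fun x => (hz x).2 }
  -- The alphabet is `Fin (Nat.card S)` rather than `S` so that `G` lives in `Type`.
  let φ : FreeSemigroup (Fin (Nat.card S)) →ₙ* S := FreeSemigroup.lift (Finite.equivFin S).symm
  have hφ : Function.Surjective φ := fun s =>
    ⟨.of (Finite.equivFin S s), (Finite.equivFin S).symm_apply_apply s⟩
  obtain ⟨G, T, hG, hT, hGfin, hTfin, f, hf⟩ :=
    exists_hom_prod_eq_imp_eq_or_lt_length (Fin (Nat.card S)) (Nat.card S)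
  refine ⟨G, T, hG, hT, hGfin, hTfin, .of_factorsThrough f hφ fun v w h => ?_⟩
  obtain rfl | ⟨hv, hw⟩ := hf v w h
  · rfl
  · rw [map_eq_zero_of_card_lt_length hid φ hv, map_eq_zero_of_card_lt_length hid φ hw]
end

section
/- Let V be a finite set with n = |V| ≥ 2 elements and let S = (V × {1, …, n−1} × V) ∪ {0}, where 0 is an extra element, with multiplication defined by: 0 is a zero element, and (v, i, w)·(x, j, y) = (v, i+j, y) if w = x and i + j ≤ n−1, and (v, i, w)·(x, j, y) = 0 otherwise. Then this multiplication is associative (so S is a semigroup), and S is nilpotent: the only idempotent element of S is the zero element 0. -/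
/-- Multiplication on `S = (V × {1, …, n−1} × V) ∪ {0}`, modeled as
`Option (V × Fin (n-1) × V)` with `none` as the zero element `0` and the middle
coordinate `i : Fin (n-1)` representing the integer `i + 1 ∈ {1, …, n−1}`:
`(v, i, w) · (x, j, y) = (v, i+j, y)` if `w = x` and `i + j ≤ n − 1` (as
represented integers), and `0` otherwise; all products involving `0` are `0`. -/
def layerMul {V : Type*} [DecidableEq V] (n : ℕ) :
    Option (V × Fin (n - 1) × V) → Option (V × Fin (n - 1) × V) →
      Option (V × Fin (n - 1) × V)
  | some (v, i, w), some (x, j, y) =>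
      if w = x then
        if h : (i : ℕ) + (j : ℕ) + 2 ≤ n - 1 then
          some (v, ⟨(i : ℕ) + (j : ℕ) + 1, by omega⟩, y)
        else none
      else none
  | _, _ => none

/- A nonzero product concatenates endpoints and adds lengths. Both bracketings of a triple product
are therefore nonzero exactly when the endpoints match and the total length is at most `n - 1`: the
partial products are shorter than the total. Since lengths are positive, a nonzero product is longer
than either factor, so no nonzero element equals its square. -/

section

variable {V : Type*} [DecidableEq V] {n : ℕ}

@[simp]
theorem none_layerMul (a : Option (V × Fin (n - 1) × V)) : layerMul n none a = none := by
  cases a <;> rfl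

@[simp]
theorem layerMul_none (a : Option (V × Fin (n - 1) × V)) : layerMul n a none = none := by
  cases a <;> rfl

theorem layerMul_eq_some_iff {a b : Option (V × Fin (n - 1) × V)} {v y : V} {l : Fin (n - 1)} :
    layerMul n a b = some (v, l, y) ↔
      ∃ i w j, a = some (v, i, w) ∧ b = some (w, j, y) ∧ (l : ℕ) = i + j + 1 := by
  constructor
  · intro h
    rcases a with _ | ⟨v', i, w⟩
    · simp at h
    rcases b with _ | ⟨x, j, y'⟩
    · simp at h
    simp only [layerMul] at h
    split_ifs at h with hwx hij
    obtain ⟨rfl, rfl, rfl⟩ := by simpa using h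
    exact ⟨i, w, j, rfl, hwx ▸ rfl, rfl⟩
  · rintro ⟨i, w, j, rfl, rfl, hl⟩
    have hij : (i : ℕ) + j + 2 ≤ n - 1 := by have := l.isLt; omega
    simp [layerMul, hij, Fin.ext_iff, hl]

theorem layerMul_layerMul_left_eq_some_iff {a b c : Option (V × Fin (n - 1) × V)} {v z : V}
    {l : Fin (n - 1)} :
    layerMul n (layerMul n a b) c = some (v, l, z) ↔
      ∃ i w j y k, a = some (v, i, w) ∧ b = some (w, j, y) ∧ c = some (y, k, z) ∧
        (l : ℕ) = i + j + k + 2 := by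
  simp only [layerMul_eq_some_iff]
  constructor
  · rintro ⟨p, y, k, ⟨i, w, j, ha, hb, hp⟩, hc, hl⟩
    exact ⟨i, w, j, y, k, ha, hb, hc, by omega⟩
  · rintro ⟨i, w, j, y, k, ha, hb, hc, hl⟩
    have hp : (i : ℕ) + j + 1 < n - 1 := by have := l.isLt; omega
    exact ⟨⟨i + j + 1, hp⟩, y, k, ⟨i, w, j, ha, hb, rfl⟩, hc, by grind⟩

theorem layerMul_layerMul_right_eq_some_iff {a b c : Option (V × Fin (n - 1) × V)} {v z : V}
    {l : Fin (n - 1)} :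
    layerMul n a (layerMul n b c) = some (v, l, z) ↔
      ∃ i w j y k, a = some (v, i, w) ∧ b = some (w, j, y) ∧ c = some (y, k, z) ∧
        (l : ℕ) = i + j + k + 2 := by
  simp only [layerMul_eq_some_iff]
  constructor
  · rintro ⟨i, w, q, ha, ⟨j, y, k, hb, hc, hq⟩, hl⟩
    exact ⟨i, w, j, y, k, ha, hb, hc, by omega⟩
  · rintro ⟨i, w, j, y, k, ha, hb, hc, hl⟩
    have hq : (j : ℕ) + k + 1 < n - 1 := by have := l.isLt; omega
    exact ⟨i, w, ⟨j + k + 1, hq⟩, ha, ⟨j, y, k, hb, hc, rfl⟩, by grind⟩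

theorem layerMul_assoc (a b c : Option (V × Fin (n - 1) × V)) :
    layerMul n (layerMul n a b) c = layerMul n a (layerMul n b c) :=
  Option.ext fun _ =>
    layerMul_layerMul_left_eq_some_iff.trans layerMul_layerMul_right_eq_some_iff.symm

theorem eq_none_of_layerMul_self {a : Option (V × Fin (n - 1) × V)} (h : layerMul n a a = a) :
    a = none := by
  rcases a with _ | ⟨v, l, y⟩
  · rfl
  obtain ⟨i, w, j, hleft, -, hl⟩ := layerMul_eq_some_iff.mp h
  have hli : l = i := congrArg (·.2.1) (Option.some.inj hleft)
  omega

end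

theorem layerMul_assoc_and_nilpotent_general {V : Type*} [DecidableEq V] (n : ℕ) :
    (∀ a b c : Option (V × Fin (n - 1) × V),
      layerMul n (layerMul n a b) c = layerMul n a (layerMul n b c)) ∧
    (∀ a : Option (V × Fin (n - 1) × V),
      layerMul n none a = none ∧ layerMul n a none = none) ∧
    (∀ a : Option (V × Fin (n - 1) × V), layerMul n a a = a → a = none) :=
  ⟨layerMul_assoc, fun a => ⟨none_layerMul a, layerMul_none a⟩,
    fun _ => eq_none_of_layerMul_self⟩

/-- For a finite set `V` with `n = |V| ≥ 2` elements, the multiplication on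
`S = (V × {1, …, n−1} × V) ∪ {0}` is associative, `0` is a zero element, and
the resulting semigroup is nilpotent: its only idempotent is `0`. -/
theorem layerMul_assoc_and_nilpotent
    {V : Type*} [Fintype V] [DecidableEq V] (n : ℕ)
    (hn : Fintype.card V = n) (h2 : 2 ≤ n) :
    (∀ a b c : Option (V × Fin (n - 1) × V),
      layerMul n (layerMul n a b) c = layerMul n a (layerMul n b c)) ∧
    (∀ a : Option (V × Fin (n - 1) × V),
      layerMul n none a = none ∧ layerMul n a none = none) ∧
    (∀ a : Option (V × Fin (n - 1) × V), layerMul n a a = a → a = none) :=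
  layerMul_assoc_and_nilpotent_general n
end
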